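/- arXiv:0710.0586 — 2 statements merged into one kernel-verified Lean document; each statement's English description precedes it below -/
import Mathlib

section
/- Let A be a C*-algebra and 𝓑 an algebra with involution containing A as a subalgebra which is a left essential ideal of 𝓑. Then for every b ∈ 𝓑 the quantity |b| := sup{‖b·a‖_A : a ∈ A, ‖a‖_A ≤ 1} is finite, the map b ↦ |b| is a submultiplicative norm on 𝓑 (in particular |b| = 0 implies b = 0), its restriction to A coincides with the C*-norm of A, and A is a left strictly essential ideal of (𝓑, |·|), i.e. |b| = sup{|b·a| : a ∈ A, |a| ≤ 1} for all b ∈ 𝓑. -/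
/-- The norm on `𝓑` induced by a left essential embedding `ι : A → 𝓑` of a C*-algebra `A`:
`|b| = sup{‖b·a‖_A : a ∈ A, ‖a‖_A ≤ 1}`, where `b·a = ι c` with `c ∈ A` and
`‖b·a‖_A := ‖c‖`. -/
noncomputable def inducedNorm {A 𝓑 : Type*} [NonUnitalCStarAlgebra A]
    [NonUnitalRing 𝓑] [Module ℂ 𝓑] [IsScalarTower ℂ 𝓑 𝓑] [SMulCommClass ℂ 𝓑 𝓑]
    (ι : A →ₙₐ[ℂ] 𝓑) (b : 𝓑) : ℝ :=
  sSup {r : ℝ | ∃ a c : A, ‖a‖ ≤ 1 ∧ ι c = b * ι a ∧ r = ‖c‖}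

/-- Multiplication by `b ∈ 𝓑` on a C*-algebra `A` embedded as a left ideal is bounded: its formal
adjoint is multiplication by `star b`, so its graph is closed. -/
theorem exists_continuousLinearMap_mul_left {A 𝓑 : Type*} [NonUnitalCStarAlgebra A]
    [NonUnitalRing 𝓑] [Module ℂ 𝓑] [SMulCommClass ℂ 𝓑 𝓑] [StarRing 𝓑]
    (ι : A →ₙₐ[ℂ] 𝓑) (hinj : Function.Injective ι)
    (hstar : ∀ a : A, ι (star a) = star (ι a))
    (hideal : ∀ (b : 𝓑) (a : A), b * ι a ∈ Set.range ι) (b : 𝓑) :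
    ∃ T : A →L[ℂ] A, ∀ a, ι (T a) = b * ι a := by
  choose f hf using hideal
  let L : A →ₗ[ℂ] A :=
    { toFun := f b
      map_add' := fun x y => hinj (by simp only [hf, map_add, mul_add])
      map_smul' := fun z x => hinj (by simp only [hf, map_smul, mul_smul_comm, RingHom.id_apply]) }
  have adjoint_apply (x y : A) : star (L y) * x = star y * f (star b) x := by
    apply hinj
    change ι (star (f b y) * x) = _
    simp only [map_mul, hstar, hf, star_mul, mul_assoc]
  refine ⟨⟨L, L.continuous_of_seq_closed_graph fun u x y hu hLu => ?_⟩, hf b⟩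
  have key (w : A) : star y * w = star (L x) * w := by
    rw [adjoint_apply]
    refine tendsto_nhds_unique (hLu.star.mul_const w) ?_
    simpa only [Function.comp_apply, adjoint_apply] using hu.star.mul_const (f (star b) w)
  rw [← sub_eq_zero, ← CStarRing.star_mul_self_eq_zero_iff, star_sub, sub_mul, key, sub_self]

/-- If `T` is multiplication by `b` on `A`, the set defining `inducedNorm ι b` is the image of the
closed unit ball of `A` under `‖T ·‖`. -/
theorem setOf_norm_mul_eq_image {A 𝓑 : Type*} [NonUnitalCStarAlgebra A]
    [NonUnitalRing 𝓑] [Module ℂ 𝓑]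
    (ι : A →ₙₐ[ℂ] 𝓑) (hinj : Function.Injective ι) {b : 𝓑} {T : A →L[ℂ] A}
    (hT : ∀ a, ι (T a) = b * ι a) :
    {r : ℝ | ∃ a c : A, ‖a‖ ≤ 1 ∧ ι c = b * ι a ∧ r = ‖c‖} =
      (fun a => ‖T a‖) '' Metric.closedBall 0 1 := by
  ext r
  simp only [Set.mem_ofPred_eq, Set.mem_image, mem_closedBall_zero_iff]
  constructor
  · rintro ⟨a, c, ha, hc, rfl⟩
    exact ⟨a, ha, by rw [hinj (hc.trans (hT a).symm)]⟩
  · rintro ⟨a, ha, rfl⟩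
    exact ⟨a, T a, ha, hT a, rfl⟩

/-- The induced norm of `b` is the operator norm of multiplication by `b` on `A`. -/
theorem inducedNorm_eq_opNorm {A 𝓑 : Type*} [NonUnitalCStarAlgebra A]
    [NonUnitalRing 𝓑] [Module ℂ 𝓑] [IsScalarTower ℂ 𝓑 𝓑] [SMulCommClass ℂ 𝓑 𝓑]
    (ι : A →ₙₐ[ℂ] 𝓑) (hinj : Function.Injective ι) {b : 𝓑} {T : A →L[ℂ] A}
    (hT : ∀ a, ι (T a) = b * ι a) : inducedNorm ι b = ‖T‖ := by
  rw [inducedNorm, setOf_norm_mul_eq_image ι hinj hT, T.sSup_unitClosedBall_eq_norm]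

/-- Let `A` be a C*-algebra and `𝓑` an algebra with involution containing
`A` as a subalgebra which is a left essential ideal of `𝓑`.  Then for every `b ∈ 𝓑` the
quantity `|b| = sup{‖b·a‖_A : a ∈ A, ‖a‖_A ≤ 1}` is finite, `|·|` is a submultiplicative
norm on `𝓑`, its restriction to `A` is the C*-norm of `A`, and `A` is a left strictly
essential ideal of `(𝓑, |·|)`. -/
theorem stmt11 {A 𝓑 : Type*} [NonUnitalCStarAlgebra A]
    [NonUnitalRing 𝓑] [Module ℂ 𝓑] [IsScalarTower ℂ 𝓑 𝓑] [SMulCommClass ℂ 𝓑 𝓑]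
    [StarRing 𝓑]
    (ι : A →ₙₐ[ℂ] 𝓑) (hinj : Function.Injective ι)
    (hstar : ∀ a : A, ι (star a) = star (ι a))
    (hideal : ∀ (b : 𝓑) (a : A), b * ι a ∈ Set.range ι)
    (hess : ∀ b : 𝓑, (∀ a : A, b * ι a = 0) → b = 0) :
    -- finiteness of the supremum
    (∀ b : 𝓑, BddAbove {r : ℝ | ∃ a c : A, ‖a‖ ≤ 1 ∧ ι c = b * ι a ∧ r = ‖c‖}) ∧
    -- `|·|` is a norm
    (∀ b : 𝓑, 0 ≤ inducedNorm ι b) ∧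
    (∀ b : 𝓑, inducedNorm ι b = 0 ↔ b = 0) ∧
    (∀ b c : 𝓑, inducedNorm ι (b + c) ≤ inducedNorm ι b + inducedNorm ι c) ∧
    (∀ (z : ℂ) (b : 𝓑), inducedNorm ι (z • b) = ‖z‖ * inducedNorm ι b) ∧
    -- submultiplicativity
    (∀ b c : 𝓑, inducedNorm ι (b * c) ≤ inducedNorm ι b * inducedNorm ι c) ∧
    -- restriction to `A` is the C*-norm
    (∀ a : A, inducedNorm ι (ι a) = ‖a‖) ∧
    -- `A` is a left strictly essential ideal of `(𝓑, |·|)`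
    (∀ b : 𝓑, inducedNorm ι b =
      sSup {r : ℝ | ∃ a : A, ‖a‖ ≤ 1 ∧ r = inducedNorm ι (b * ι a)}) := by
  choose T hT using exists_continuousLinearMap_mul_left ι hinj hstar hideal
  have norm_eq (b : 𝓑) : inducedNorm ι b = ‖T b‖ := inducedNorm_eq_opNorm ι hinj (hT b)
  have norm_coe (a : A) : inducedNorm ι (ι a) = ‖a‖ := by
    rw [inducedNorm_eq_opNorm ι hinj (T := ContinuousLinearMap.mul ℂ A a) fun x => map_mul ι a x,
      ContinuousLinearMap.opNorm_mul_apply]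
  refine ⟨fun b => ?_, fun b => ?_, fun b => ?_, fun b c => ?_, fun z b => ?_, fun b c => ?_,
    norm_coe, fun b => ?_⟩
  · rw [setOf_norm_mul_eq_image ι hinj (hT b)]
    refine ⟨‖T b‖, ?_⟩
    rintro _ ⟨a, ha, rfl⟩
    exact (T b).unit_le_opNorm a (mem_closedBall_zero_iff.mp ha)
  · rw [norm_eq]
    exact norm_nonneg _
  · rw [norm_eq, norm_eq_zero]
    refine ⟨fun h => hess b fun a => ?_, ?_⟩
    · rw [← hT, h, zero_apply, map_zero]
    · rintro rfl
      ext a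
      exact hinj (by simp [hT])
  · rw [inducedNorm_eq_opNorm ι hinj (T := T b + T c) fun a => by simp [hT, add_mul],
      norm_eq, norm_eq]
    exact norm_add_le _ _
  · rw [inducedNorm_eq_opNorm ι hinj (T := z • T b) fun a => by simp [hT, smul_mul_assoc],
      norm_eq, norm_smul]
  · rw [inducedNorm_eq_opNorm ι hinj (T := (T b).comp (T c)) fun a => by simp [hT, mul_assoc],
      norm_eq, norm_eq]
    exact (T b).opNorm_comp_le (T c)
  · simp_rw [← hT, norm_coe]
    rw [norm_eq, ← (T b).sSup_unitClosedBall_eq_norm]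
    congr 1
    ext r
    simp [eq_comm]
end

section
/- Let A be a C*-algebra, H a complex Hilbert space, and π : A → B(H) an injective *-homomorphism which is nondegenerate, i.e. the closed linear span of {π(a)ξ : a ∈ A, ξ ∈ H} is H. Then LM_π(A) := {T ∈ B(H) : T·π(a) ∈ π(A) for all a ∈ A} equals the closure of π(A) in B(H) with respect to the left strict topology, i.e. the locally convex topology on B(H) generated by the seminorms T ↦ ‖T·π(a)‖ (operator norm), a ∈ A. -/
/-- Let `A` be a C*-algebra, `H` a complex Hilbert space and
`π : A → B(H)` an injective nondegenerate *-homomorphism.  Then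
`LM_π(A) = {T ∈ B(H) : T·π(a) ∈ π(A) for all a ∈ A}` equals the closure of `π(A)` in
`B(H)` with respect to the left strict topology, i.e. the topology generated by the
seminorms `T ↦ ‖T·π(a)‖`, `a ∈ A` (the coarsest topology making every map `T ↦ T·π(a)`
into `B(H)` continuous). -/
theorem stmt15 {A H : Type*} [NonUnitalCStarAlgebra A]
    [NormedAddCommGroup H] [InnerProductSpace ℂ H] [CompleteSpace H]
    (π : A →⋆ₙₐ[ℂ] (H →L[ℂ] H)) (hinj : Function.Injective π)
    (hnondeg : Dense
      (Submodule.span ℂ {ξ : H | ∃ (a : A) (η : H), π a η = ξ} : Set H)) :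
    letI leftStrictTopology : TopologicalSpace (H →L[ℂ] H) :=
      ⨅ a : A, TopologicalSpace.induced
        (fun T : H →L[ℂ] H => T.comp (π a)) inferInstance
    @closure _ leftStrictTopology (Set.range π) =
      {T : H →L[ℂ] H | ∀ a : A, T.comp (π a) ∈ Set.range π} := by
  let := CStarAlgebra.spectralOrder A
  have := CStarAlgebra.spectralOrderedRing A
  have hiso : Isometry π := NonUnitalStarAlgHom.isometry π hinj
  have hclosed : IsClosed (Set.range π) := hiso.isClosedEmbedding.isClosed_range
  apply Set.Subset.antisymm
  · refine @closure_minimal _ (_) _ _ ?_ ?_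
    · rintro _ ⟨b, rfl⟩ a
      exact ⟨b * a, map_mul π b a⟩
    · rw [Set.ofPred_forall]
      refine @isClosed_iInter _ _ (_) _ fun a => ?_
      exact @IsClosed.preimage _ _ (_) _ _
        (continuous_iInf_dom (i := a) continuous_induced_dom) _ hclosed
  · intro T hT
    have happrox := (CStarAlgebra.increasingApproximateUnit A).toIsApproximateUnit
    refine @mem_closure_of_tendsto _ (_) _ T _ (fun e => T.comp (π e)) _ happrox.neBot ?_
      (.of_forall hT)
    simp only [nhds_iInf, nhds_induced, Filter.tendsto_iInf, Filter.tendsto_comap_iff]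
    intro a
    have hcont : Continuous fun e : A => T.comp (π e) :=
      continuous_const.clm_comp hiso.continuous
    refine ((hcont.tendsto a).comp (happrox.tendsto_mul_right a)).congr fun e => ?_
    simp only [Function.comp_apply, map_mul]
    rfl
end
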